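/- arXiv:1810.08926 — 2 statements merged into one kernel-verified Lean document; each statement's English description precedes it below -/
import Mathlib

section
/- (Theorem 2) Let A : ℝ^k → ℝ^ℓ be a continuous linear map between finite-dimensional real inner product spaces with operator norm ‖A‖, let w ∈ ℝ^k with ‖w‖ = 1 and ρ(A; w) < 1, let K ⊆ ℝ^k be a nonempty bounded set, and let μ* ∈ K be a maximizer of μ ↦ ⟪w, μ⟫ over K. Then there exists a vector wL ∈ ℝ^ℓ with ‖wL‖ = 1 such that for every μ ∈ K, ⟪wL, A μ⟫ − ⟪wL, A μ*⟫ ≤ (diam K · ‖A‖ · ρ(A; w)) / √(1 − ρ(A; w)²). -/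
open scoped RealInnerProductSpace

/-- The teaching risk of a worldview `A` with respect to reward weights `w`:
`ρ(A; w) = sup { ⟪w, v⟫ : v ∈ ker A, ‖v‖ ≤ 1 }`. -/
noncomputable def teachingRisk {k l : ℕ}
    (A : EuclideanSpace ℝ (Fin k) →L[ℝ] EuclideanSpace ℝ (Fin l))
    (w : EuclideanSpace ℝ (Fin k)) : ℝ :=
  sSup {r : ℝ | ∃ v ∈ LinearMap.ker A.toLinearMap, ‖v‖ ≤ 1 ∧ r = ⟪w, v⟫}

/-! Split `w = n + u` along `ker A ⊕ (ker A)ᗮ`; the teaching risk is `ρ = ‖n‖`, so `ρ < ‖w‖` means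
`u ≠ 0`. As `(ker A)ᗮ` is the closure of the range of the adjoint `A†`, and this range is closed,
some unit vector `z` satisfies `A† z = c • u` with `0 ≤ c`, and then `c * ‖u‖ = ‖A† z‖ ≤ ‖A‖`.
A displacement `x` that does not increase `⟪w, ·⟫` has `⟪u, x⟫ ≤ -⟪n, x⟫ ≤ ρ * ‖x‖`, so
`⟪z, A x⟫ = c * ⟪u, x⟫ ≤ ‖A‖ * ρ / ‖u‖ * ‖x‖`. For `‖w‖ = 1`, Pythagoras gives
`‖u‖ = √(1 - ρ ^ 2)`. -/

section OrthogonalProjection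

variable {E : Type*} [NormedAddCommGroup E] [InnerProductSpace ℝ E]
  (N : Submodule ℝ E) [N.HasOrthogonalProjection]

theorem norm_starProjection_orthogonal_eq_sqrt (w : E) :
    ‖Nᗮ.starProjection w‖ = √(‖w‖ ^ 2 - ‖N.starProjection w‖ ^ 2) := by
  rw [N.norm_sq_eq_add_norm_sq_starProjection w, add_sub_cancel_left,
    Real.sqrt_sq (norm_nonneg _)]

theorem isGreatest_inner_norm_starProjection (w : E) :
    IsGreatest {r : ℝ | ∃ v ∈ N, ‖v‖ ≤ 1 ∧ r = ⟪w, v⟫} ‖N.starProjection w‖ := by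
  have inner_eq {v : E} (hv : v ∈ N) : ⟪w, v⟫ = ⟪N.starProjection w, v⟫ := by
    rw [N.inner_starProjection_left_eq_right, N.starProjection_eq_self_iff.mpr hv]
  constructor
  · have hmem : N.starProjection w ∈ N := N.starProjection_apply_mem w
    refine ⟨‖N.starProjection w‖⁻¹ • N.starProjection w, N.smul_mem _ hmem, ?_, ?_⟩
    · rw [norm_smul, norm_inv, norm_norm]
      exact inv_mul_le_one
    · rw [real_inner_smul_right, inner_eq hmem, real_inner_self_eq_norm_mul_norm, ← mul_assoc,
        inv_mul_mul_self]
  · rintro r ⟨v, hvN, hv, rfl⟩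
    calc ⟪w, v⟫ = ⟪N.starProjection w, v⟫ := inner_eq hvN
      _ ≤ ‖N.starProjection w‖ * ‖v‖ := real_inner_le_norm _ _
      _ ≤ ‖N.starProjection w‖ := mul_le_of_le_one_right (norm_nonneg _) hv

theorem inner_starProjection_orthogonal_le {w x : E} (hwx : ⟪w, x⟫ ≤ 0) :
    ⟪Nᗮ.starProjection w, x⟫ ≤ ‖N.starProjection w‖ * ‖x‖ := by
  have hsplit : ⟪w, x⟫ = ⟪N.starProjection w, x⟫ + ⟪Nᗮ.starProjection w, x⟫ := by
    rw [← inner_add_left, N.starProjection_add_starProjection_orthogonal]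
  have hcauchy := neg_le_of_abs_le (abs_real_inner_le_norm (N.starProjection w) x)
  linarith

end OrthogonalProjection

theorem teachingRisk_eq_norm_starProjection_ker {k l : ℕ}
    (A : EuclideanSpace ℝ (Fin k) →L[ℝ] EuclideanSpace ℝ (Fin l))
    (w : EuclideanSpace ℝ (Fin k)) :
    teachingRisk A w = ‖A.ker.starProjection w‖ :=
  (isGreatest_inner_norm_starProjection A.ker w).csSup_eq

theorem exists_norm_eq_one_map_eq_smul {E F : Type*}
    [NormedAddCommGroup E] [NormedSpace ℝ E] [NormedAddCommGroup F] [NormedSpace ℝ F]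
    (B : F →L[ℝ] E) {u : E} (hu : u ∈ B.range) (hu0 : u ≠ 0) :
    ∃ z : F, ‖z‖ = 1 ∧ ∃ c : ℝ, 0 ≤ c ∧ c ≤ ‖B‖ / ‖u‖ ∧ B z = c • u := by
  obtain ⟨y, rfl⟩ := hu
  have hy : y ≠ 0 := fun h => hu0 (by simp [h])
  have hz : ‖‖y‖⁻¹ • y‖ = 1 := norm_smul_inv_norm (𝕜 := ℝ) hy
  refine ⟨‖y‖⁻¹ • y, hz, ‖y‖⁻¹, by positivity, ?_, map_smul B _ y⟩
  rw [le_div_iff₀ (norm_pos_iff.mpr hu0)]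
  calc ‖y‖⁻¹ * ‖B y‖ = ‖B (‖y‖⁻¹ • y)‖ := by rw [map_smul, norm_smul, norm_inv, norm_norm]
    _ ≤ ‖B‖ := B.unit_le_opNorm _ hz.le

section Adjoint

open ContinuousLinearMap (adjoint)

variable {E F : Type*} [NormedAddCommGroup E] [InnerProductSpace ℝ E] [CompleteSpace E]
  [NormedAddCommGroup F] [InnerProductSpace ℝ F] [CompleteSpace F] {A : E →L[ℝ] F}

theorem exists_norm_eq_one_forall_inner_map_le (hA : IsClosed ((adjoint A).range : Set E))
    {w : E} (hw : w ∉ A.ker) :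
    ∃ z : F, ‖z‖ = 1 ∧ ∀ x : E, ⟪w, x⟫ ≤ 0 →
      ⟪z, A x⟫ ≤ ‖x‖ * ‖A‖ * ‖A.ker.starProjection w‖ / ‖A.kerᗮ.starProjection w‖ := by
  have hmem : A.kerᗮ.starProjection w ∈ (adjoint A).range := by
    rw [← hA.submodule_topologicalClosure_eq, ← A.orthogonal_ker]
    exact A.kerᗮ.starProjection_apply_mem w
  have hne : A.kerᗮ.starProjection w ≠ 0 := by
    rwa [Ne, Submodule.starProjection_apply_eq_zero_iff, Submodule.orthogonal_orthogonal]
  obtain ⟨z, hz, c, hc, hcA, hzc⟩ := exists_norm_eq_one_map_eq_smul (adjoint A) hmem hne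
  rw [LinearIsometryEquiv.norm_map] at hcA
  refine ⟨z, hz, fun x hx => ?_⟩
  calc ⟪z, A x⟫ = c * ⟪A.kerᗮ.starProjection w, x⟫ := by
        rw [← A.adjoint_inner_left, hzc, real_inner_smul_left]
    _ ≤ c * (‖A.ker.starProjection w‖ * ‖x‖) := by
        gcongr
        exact inner_starProjection_orthogonal_le A.ker hx
    _ ≤ ‖A‖ / ‖A.kerᗮ.starProjection w‖ * (‖A.ker.starProjection w‖ * ‖x‖) := by gcongr
    _ = ‖x‖ * ‖A‖ * ‖A.ker.starProjection w‖ / ‖A.kerᗮ.starProjection w‖ := by ring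

/-- By the closed range theorem, `hA` says equivalently that `A` has closed range. -/
theorem theorem2_guarantee_bounded_suboptimality_general
    (hA : IsClosed ((adjoint A).range : Set E)) {w : E} (hw : w ∉ A.ker)
    {K : Set E} (hK : Bornology.IsBounded K) {μstar : E} (hμstar : μstar ∈ K)
    (hmax : ∀ μ ∈ K, ⟪w, μ⟫ ≤ ⟪w, μstar⟫) :
    ∃ wL : F, ‖wL‖ = 1 ∧ ∀ μ ∈ K, ⟪wL, A μ⟫ - ⟪wL, A μstar⟫ ≤
      Metric.diam K * ‖A‖ * ‖A.ker.starProjection w‖ / ‖A.kerᗮ.starProjection w‖ := by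
  obtain ⟨wL, hwL, hbound⟩ := exists_norm_eq_one_forall_inner_map_le hA hw
  refine ⟨wL, hwL, fun μ hμ => ?_⟩
  have hdescent : ⟪w, μ - μstar⟫ ≤ 0 := by
    rw [inner_sub_right]
    exact sub_nonpos.mpr (hmax μ hμ)
  have hdiam : ‖μ - μstar‖ ≤ Metric.diam K := by
    rw [← dist_eq_norm]
    exact Metric.dist_le_diam_of_mem hK hμ hμstar
  rw [← inner_sub_right, ← map_sub]
  exact (hbound _ hdescent).trans (by gcongr)

end Adjoint

theorem theorem2_guarantee_bounded_suboptimality {k l : ℕ}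
    (A : EuclideanSpace ℝ (Fin k) →L[ℝ] EuclideanSpace ℝ (Fin l))
    (w : EuclideanSpace ℝ (Fin k)) (hw : ‖w‖ = 1) (hρ : teachingRisk A w < 1)
    (K : Set (EuclideanSpace ℝ (Fin k))) (hne : K.Nonempty) (hK : Bornology.IsBounded K)
    (μstar : EuclideanSpace ℝ (Fin k)) (hμstar : μstar ∈ K)
    (hmax : ∀ μ ∈ K, ⟪w, μ⟫ ≤ ⟪w, μstar⟫) :
    ∃ wL : EuclideanSpace ℝ (Fin l), ‖wL‖ = 1 ∧ ∀ μ ∈ K,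
      ⟪wL, A μ⟫ - ⟪wL, A μstar⟫ ≤
        Metric.diam K * ‖A‖ * teachingRisk A w / Real.sqrt (1 - teachingRisk A w ^ 2) := by
  have hwA : w ∉ A.ker := fun h => hρ.ne <| by
    rw [teachingRisk_eq_norm_starProjection_ker, A.ker.norm_starProjection_apply h, hw]
  simpa only [teachingRisk_eq_norm_starProjection_ker, norm_starProjection_orthogonal_eq_sqrt, hw,
    one_pow] using theorem2_guarantee_bounded_suboptimality_general
      (Submodule.closed_of_finiteDimensional _) hwA hK hμstar hmax
end

section
/- Let A : ℝ^k → ℝ^ℓ be a nonzero continuous linear map between finite-dimensional real inner product spaces with operator norm ‖A‖, let w ∈ ℝ^k with ‖w‖ = 1 and ρ(A; w) < 1, and let Q(w) be the orthogonal projection of w onto (ker A)^⊥. Then there exists u ∈ ℝ^ℓ with A* u = Q(w) and ‖u‖ ≥ √(1 − ρ(A; w)²) / ‖A‖. -/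
open scoped RealInnerProductSpace

/-!
The supremum defining the teaching risk is attained at the normalised projection of `w` onto
`ker A`, so `ρ(A; w) = ‖P w‖` and Pythagoras gives `‖Q w‖ = √(‖w‖² - ρ(A; w)²)`. Since `Q w` lies
in `(ker A)ᗮ`, the closure of the range of `A†`, closedness of that range yields a solution of
`A† u = Q w`, and every solution satisfies `‖Q w‖ ≤ ‖A†‖ ‖u‖ = ‖A‖ ‖u‖`.
-/

section General

variable {𝕜 E F : Type*} [RCLike 𝕜]
  [NormedAddCommGroup E] [InnerProductSpace 𝕜 E] [NormedAddCommGroup F] [InnerProductSpace 𝕜 F]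

theorem isGreatest_re_inner_norm_orthogonalProjectionOnto (K : Submodule 𝕜 E)
    [K.HasOrthogonalProjection] (w : E) :
    IsGreatest {r : ℝ | ∃ v ∈ K, ‖v‖ ≤ 1 ∧ r = RCLike.re (inner 𝕜 w v)}
      ‖K.orthogonalProjectionOnto w‖ := by
  set p := K.orthogonalProjectionOnto w
  have re_inner_eq (v : K) : RCLike.re (inner 𝕜 w (v : E)) = RCLike.re (inner 𝕜 p v) :=
    congrArg RCLike.re (Submodule.inner_orthogonalProjectionOnto_eq_of_mem_right v w).symm
  constructor
  -- For `p = 0` the convention `0⁻¹ = 0` makes this witness the zero vector.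
  · refine ⟨(((‖p‖⁻¹ : ℝ) : 𝕜) • p : K), Submodule.coe_mem _, ?_, ?_⟩
    · rw [Submodule.norm_coe, norm_smul, RCLike.norm_ofReal, abs_inv, abs_norm]
      exact inv_mul_le_one
    · rw [re_inner_eq, inner_smul_right, RCLike.re_ofReal_mul, inner_self_eq_norm_sq]
      rcases eq_or_ne ‖p‖ 0 with h | h
      · simp [h]
      · field_simp
  · rintro r ⟨v, hvK, hv, rfl⟩
    calc RCLike.re (inner 𝕜 w v) = RCLike.re (inner 𝕜 p ⟨v, hvK⟩) := re_inner_eq ⟨v, hvK⟩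
      _ ≤ ‖p‖ * ‖v‖ := re_inner_le_norm p ⟨v, hvK⟩
      _ ≤ ‖p‖ := mul_le_of_le_one_right (norm_nonneg p) hv

/-- The teaching risk of a continuous linear map between real or complex inner product spaces.
Since complex inner products are not ordered, the supremum is taken over their real parts. -/
noncomputable def hilbertTeachingRisk (A : E →L[𝕜] F) (w : E) : ℝ :=
  sSup {r : ℝ | ∃ v ∈ LinearMap.ker A.toLinearMap, ‖v‖ ≤ 1 ∧ r = RCLike.re (inner 𝕜 w v)}

variable [CompleteSpace E]

theorem hilbertTeachingRisk_eq_norm_orthogonalProjectionOnto (A : E →L[𝕜] F) (w : E) :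
    hilbertTeachingRisk A w = ‖(LinearMap.ker A.toLinearMap).orthogonalProjectionOnto w‖ :=
  (isGreatest_re_inner_norm_orthogonalProjectionOnto _ w).csSup_eq

theorem sqrt_norm_sq_sub_hilbertTeachingRisk_sq (A : E →L[𝕜] F) (w : E) :
    √(‖w‖ ^ 2 - hilbertTeachingRisk A w ^ 2) =
      ‖(LinearMap.ker A.toLinearMap)ᗮ.orthogonalProjectionOnto w‖ := by
  rw [hilbertTeachingRisk_eq_norm_orthogonalProjectionOnto,
    Submodule.norm_sq_eq_add_norm_sq_projection w (LinearMap.ker A.toLinearMap),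
    add_sub_cancel_left, Real.sqrt_sq (norm_nonneg _)]

variable [CompleteSpace F]

theorem orthogonalProjectionOnto_orthogonal_ker_mem_range_adjoint (A : E →L[𝕜] F)
    (hclosed : IsClosed (Set.range (ContinuousLinearMap.adjoint A))) (w : E) :
    ((LinearMap.ker A.toLinearMap)ᗮ.orthogonalProjectionOnto w : E) ∈
      (ContinuousLinearMap.adjoint A).range := by
  have orthogonal_ker_eq : (LinearMap.ker A.toLinearMap)ᗮ = (ContinuousLinearMap.adjoint A).range :=
    (ContinuousLinearMap.orthogonal_ker A).trans hclosed.submodule_topologicalClosure_eq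
  exact orthogonal_ker_eq ▸ Submodule.coe_mem _

theorem sqrt_norm_sq_sub_hilbertTeachingRisk_sq_le_of_adjoint_eq {A : E →L[𝕜] F} {w : E} {u : F}
    (hu : ContinuousLinearMap.adjoint A u =
      (LinearMap.ker A.toLinearMap)ᗮ.orthogonalProjectionOnto w) :
    √(‖w‖ ^ 2 - hilbertTeachingRisk A w ^ 2) ≤ ‖A‖ * ‖u‖ :=
  calc √(‖w‖ ^ 2 - hilbertTeachingRisk A w ^ 2)
      = ‖(LinearMap.ker A.toLinearMap)ᗮ.orthogonalProjectionOnto w‖ :=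
        sqrt_norm_sq_sub_hilbertTeachingRisk_sq A w
    _ = ‖ContinuousLinearMap.adjoint A u‖ := by rw [hu, Submodule.norm_coe]
    _ ≤ ‖ContinuousLinearMap.adjoint A‖ * ‖u‖ := (ContinuousLinearMap.adjoint A).le_opNorm u
    _ = ‖A‖ * ‖u‖ := by rw [LinearIsometryEquiv.norm_map]

theorem exists_adjoint_preimage_of_projection_general (A : E →L[𝕜] F) (hA : A ≠ 0)
    (hclosed : IsClosed (Set.range (ContinuousLinearMap.adjoint A))) (w : E) :
    ∃ u : F,
      ContinuousLinearMap.adjoint A u =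
        ((LinearMap.ker A.toLinearMap)ᗮ.orthogonalProjectionOnto w : E) ∧
      √(‖w‖ ^ 2 - hilbertTeachingRisk A w ^ 2) / ‖A‖ ≤ ‖u‖ := by
  obtain ⟨u, hu⟩ := orthogonalProjectionOnto_orthogonal_ker_mem_range_adjoint A hclosed w
  exact ⟨u, hu, (div_le_iff₀' (norm_pos_iff.mpr hA)).mpr
    (sqrt_norm_sq_sub_hilbertTeachingRisk_sq_le_of_adjoint_eq hu)⟩

end General

theorem teachingRisk_eq_hilbertTeachingRisk {k l : ℕ}
    (A : EuclideanSpace ℝ (Fin k) →L[ℝ] EuclideanSpace ℝ (Fin l)) (w : EuclideanSpace ℝ (Fin k)) :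
    teachingRisk A w = hilbertTeachingRisk A w :=
  rfl

theorem exists_adjoint_preimage_of_projection {k l : ℕ}
    (A : EuclideanSpace ℝ (Fin k) →L[ℝ] EuclideanSpace ℝ (Fin l)) (hA : A ≠ 0)
    (w : EuclideanSpace ℝ (Fin k)) (hw : ‖w‖ = 1) (hρ : teachingRisk A w < 1) :
    ∃ u : EuclideanSpace ℝ (Fin l),
      ContinuousLinearMap.adjoint A u =
        (Submodule.orthogonalProjectionOnto (LinearMap.ker A.toLinearMap)ᗮ w : EuclideanSpace ℝ (Fin k)) ∧
      Real.sqrt (1 - teachingRisk A w ^ 2) / ‖A‖ ≤ ‖u‖ := by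
  have hclosed := (ContinuousLinearMap.adjoint A).range.closed_of_finiteDimensional
  simpa only [teachingRisk_eq_hilbertTeachingRisk, hw, one_pow] using
    exists_adjoint_preimage_of_projection_general A hA hclosed w
end
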